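/- The ground state energy of the subsystem toric code Hamiltonian H = −∑_T G(T) on the L×L torus is E₀ = −2√2·L², and the ground space is 4-fold degenerate (spanned by the 2 logical qubits in the trivial syndrome sector x_p = z_p = 1). -/

import Mathlib

/-- Qubits of the subsystem toric code on the `L × L` torus:
`(0,x,y)` is the vertex at `(x,y)`, `(1,x,y)` is the horizontal edge from `(x,y)` to `(x+1,y)`,
and `(2,x,y)` is the vertical edge from `(x,y)` to `(x,y+1)`. -/
abbrev Q (L : ℕ) := Fin 3 × ZMod L × ZMod L

/-- Support of the weight-6 X-type stabilizer of plaquette `p` (product of SW and NE triangles). -/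
def SXsup (L : ℕ) (p : ZMod L × ZMod L) : Finset (Q L) :=
  {(0, p.1, p.2), (0, p.1 + 1, p.2 + 1), (1, p.1, p.2), (1, p.1, p.2 + 1),
   (2, p.1, p.2), (2, p.1 + 1, p.2)}

/-- Support of the weight-6 Z-type stabilizer of plaquette `p` (product of SE and NW triangles). -/
def SZsup (L : ℕ) (p : ZMod L × ZMod L) : Finset (Q L) :=
  {(0, p.1 + 1, p.2), (0, p.1, p.2 + 1), (1, p.1, p.2), (1, p.1, p.2 + 1),
   (2, p.1, p.2), (2, p.1 + 1, p.2)}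

/-- SW (X-type) triangle of plaquette `p`. -/
def TSW (L : ℕ) (p : ZMod L × ZMod L) : Finset (Q L) :=
  {(0, p.1, p.2), (1, p.1, p.2), (2, p.1, p.2)}

/-- NE (X-type) triangle of plaquette `p`. -/
def TNE (L : ℕ) (p : ZMod L × ZMod L) : Finset (Q L) :=
  {(0, p.1 + 1, p.2 + 1), (1, p.1, p.2 + 1), (2, p.1 + 1, p.2)}

/-- SE (Z-type) triangle of plaquette `p`. -/
def TSE (L : ℕ) (p : ZMod L × ZMod L) : Finset (Q L) :=
  {(0, p.1 + 1, p.2), (1, p.1, p.2), (2, p.1 + 1, p.2)}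

/-- NW (Z-type) triangle of plaquette `p`. -/
def TNW (L : ℕ) (p : ZMod L × ZMod L) : Finset (Q L) :=
  {(0, p.1, p.2 + 1), (1, p.1, p.2 + 1), (2, p.1, p.2)}

/-- The horizontal line `Γ` at height `y₀`: all vertices and horizontal edges with `y = y₀`. -/
def Gam (L : ℕ) [NeZero L] (y₀ : ZMod L) : Finset (Q L) :=
  Finset.univ.filter fun q => (q.1 = 0 ∨ q.1 = 1) ∧ q.2.2 = y₀

/-- The vertical line `Λ` at horizontal position `x₀`: all vertices and vertical edges with `x = x₀`. -/
def Lam (L : ℕ) [NeZero L] (x₀ : ZMod L) : Finset (Q L) :=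
  Finset.univ.filter fun q => (q.1 = 0 ∨ q.1 = 2) ∧ q.2.1 = x₀

/-- `F₂`-indicator vector of a finite set. -/
def ind {α : Type*} [DecidableEq α] (S : Finset α) : α → ZMod 2 :=
  fun i => if i ∈ S then 1 else 0

/-- The Pauli operator `X^a Z^b = ∏ᵢ Xᵢ^{aᵢ} Zᵢ^{bᵢ}` (modulo phase) on qubits indexed by `ι`,
as a matrix in the computational basis: `(X^a Z^b)|y⟩ = (-1)^{b·y} |y+a⟩`. -/
def pauliOp {ι : Type*} [Fintype ι] [DecidableEq ι] (a b : ι → ZMod 2) :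
    Matrix (ι → ZMod 2) (ι → ZMod 2) ℂ :=
  Matrix.of fun x y => if x = y + a then (-1 : ℂ) ^ (∑ i, (b i * y i).val) else 0

/-- The subsystem toric code Hamiltonian `H = −∑_T G(T)`, summing the four triangle
operators of every plaquette, as a matrix on the `2^{3L²}`-dimensional Hilbert space. -/
noncomputable def Ham (L : ℕ) [NeZero L] : Matrix (Q L → ZMod 2) (Q L → ZMod 2) ℂ :=
  -∑ p : ZMod L × ZMod L,
    (pauliOp (ind (TSW L p)) 0 + pauliOp (ind (TNE L p)) 0 +
     pauliOp 0 (ind (TSE L p)) + pauliOp 0 (ind (TNW L p)))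

/-!
Let `K = X + X' + Z + Z'` be the sum of the four triangle operators of a plaquette. Each of the
first two anticommutes with each of the last two, so `K² = 4 + 2 X X' + 2 Z Z'`, where `X X'` and
`Z Z'` are the stabilizers of the plaquette, and

  `4√2 (2√2 - K) = (2√2 - K)² + (1 - X X')² + (1 - Z Z')² ≥ 0`.

Summing over the plaquettes gives the energy bound. A state attains it if and only if every
stabilizer fixes it and, for every plaquette, so does `W = (X + Z) / √2`, to which `K / (2√2)`
reduces on the stabilizer code. Averaging over the stabilizer group, in which only the identity has
nonzero trace, shows that the code has dimension `2 ^ (n - r - s)`, where `n` is the number of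
qubits and `r`, `s` are the numbers of independent `X`- and `Z`-type stabilizers. Each condition
`W v = v` halves the dimension, because `X Z` anticommutes with `W` and commutes with all
stabilizers and with the `W` of the other plaquettes. On the torus `n = 3 L²` and `r = s = L² - 1`,
since the only relation among the stabilizers of one type is that their product is `1`; this leaves
dimension `2 ^ (3 L² - 2 (L² - 1) - L²) = 4`.
-/

open Matrix
open Module (End finrank)
open Module.End (eigenspace)
open scoped ComplexOrder

section EigenspaceHalving

open Module.End

variable {K V : Type*} [Field K] [AddCommGroup V] [Module K V] {U : Submodule K V}

theorem mapsTo_inf_eigenspace {f g : End K V} {μ : K} (hfU : Set.MapsTo f U U)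
    (hgf : Commute g f) :
    Set.MapsTo f ↑(U ⊓ eigenspace g μ) ↑(U ⊓ eigenspace g μ) :=
  hfU.inter_inter (mapsTo_genEigenspace_of_comm hgf μ 1)

variable [CharZero K] [FiniteDimensional K V]

theorem two_mul_finrank_eigenspace_one {w y : End K V} (hw : w * w = 1) (hy : IsUnit y)
    (hwy : w * y = -(y * w)) : 2 * finrank K (eigenspace w 1) = finrank K V := by
  obtain ⟨u, rfl⟩ := hy
  have htrace : LinearMap.trace K V w = 0 := by
    have hconj : w = -(u * w * ↑u⁻¹) := by rw [← neg_mul, ← hwy, Units.mul_inv_cancel_right]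
    have := congrArg (LinearMap.trace K V) hconj
    rw [map_neg, LinearMap.trace_conj] at this
    exact self_eq_neg.mp this
  have hproj : LinearMap.IsProj (eigenspace w 1) ((2⁻¹ : K) • (1 + w)) := by
    refine ⟨fun v ↦ ?_, fun v hv ↦ ?_⟩
    · have hwv : w (w v) = v := LinearMap.congr_fun hw v
      simp [hwv, add_comm]
    · have hwv : w v = v := by simpa using mem_eigenspace_iff.mp hv
      simp [hwv, -smul_add, ← two_smul K v]
  have := hproj.trace
  rw [map_smul, map_add, htrace, LinearMap.trace_one, add_zero, smul_eq_mul,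
    inv_mul_eq_iff_eq_mul₀ two_ne_zero] at this
  exact_mod_cast this.symm

theorem two_mul_finrank_inf_eigenspace_one {w y : End K V} (hw : w * w = 1) (hy : IsUnit y)
    (hwy : w * y = -(y * w)) (hwU : Set.MapsTo w U U) (hyU : Set.MapsTo y U U) :
    2 * finrank K ↥(U ⊓ eigenspace w 1) = finrank K U := by
  have hinj : Function.Injective (y.restrict hyU) := fun v v' h ↦
    Subtype.ext (((isUnit_iff y).mp hy).injective (congrArg Subtype.val h))
  have hunit : IsUnit (y.restrict hyU) :=
    (isUnit_iff _).mpr ⟨hinj, LinearMap.injective_iff_surjective.mp hinj⟩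
  rw [eigenspace, U.inf_genEigenspace w hwU, Submodule.finrank_map_subtype_eq]
  refine two_mul_finrank_eigenspace_one (y := y.restrict hyU) ?_ hunit ?_
  · ext v
    exact LinearMap.congr_fun hw v
  · ext v
    exact LinearMap.congr_fun hwy v

theorem two_pow_card_mul_finrank_inf_iInf_eigenspace_one {κ : Type*} {w y : κ → End K V}
    (s : Finset κ) (hw : ∀ p, w p * w p = 1) (hy : ∀ p, IsUnit (y p))
    (hwy : ∀ p, w p * y p = -(y p * w p)) (hww : Pairwise fun p q ↦ Commute (w p) (w q))
    (hwy_ne : Pairwise fun p q ↦ Commute (w p) (y q)) (hwU : ∀ p ∈ s, Set.MapsTo (w p) U U)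
    (hyU : ∀ p ∈ s, Set.MapsTo (y p) U U) :
    2 ^ s.card * finrank K ↥(U ⊓ ⨅ p ∈ s, eigenspace (w p) 1) = finrank K U := by
  classical
  induction s using Finset.induction_on generalizing U with
  | empty =>
    have htop : U ⊓ ⨅ p ∈ (∅ : Finset κ), eigenspace (w p) 1 = U := by simp
    rw [htop, Finset.card_empty, pow_zero, one_mul]
  | insert p s hp ih =>
    rw [Finset.forall_mem_insert] at hwU hyU
    have hne : ∀ q ∈ s, p ≠ q := fun q hq ↦ (ne_of_mem_of_not_mem hq hp).symm
    rw [Finset.iInf_insert, ← inf_assoc, Finset.card_insert_of_notMem hp, pow_succ', mul_assoc,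
      ih (fun q hq ↦ mapsTo_inf_eigenspace (hwU.2 q hq) (hww (hne q hq)))
        (fun q hq ↦ mapsTo_inf_eigenspace (hyU.2 q hq) (hwy_ne (hne q hq)))]
    exact two_mul_finrank_inf_eigenspace_one (hw p) (hy p) (hwy p) hwU.1 hyU.1

end EigenspaceHalving

section HermitianMatrix

variable {𝕜 n : Type*} [RCLike 𝕜] [Fintype n]

theorem add_mulVec_eq_zero_iff_of_posSemidef {A B : Matrix n n 𝕜} (hA : A.PosSemidef)
    (hB : B.PosSemidef) {v : n → 𝕜} : (A + B) *ᵥ v = 0 ↔ A *ᵥ v = 0 ∧ B *ᵥ v = 0 := by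
  rw [← hA.dotProduct_mulVec_zero_iff, ← hB.dotProduct_mulVec_zero_iff,
    ← (hA.add hB).dotProduct_mulVec_zero_iff, add_mulVec, dotProduct_add]
  exact add_eq_zero_iff_of_nonneg (hA.dotProduct_mulVec_nonneg v) (hB.dotProduct_mulVec_nonneg v)

theorem sum_mulVec_eq_zero_iff_of_posSemidef {κ : Type*} {A : κ → Matrix n n 𝕜} (s : Finset κ)
    (hA : ∀ p ∈ s, (A p).PosSemidef) {v : n → 𝕜} :
    (∑ p ∈ s, A p) *ᵥ v = 0 ↔ ∀ p ∈ s, A p *ᵥ v = 0 := by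
  rw [← (posSemidef_sum s hA).dotProduct_mulVec_zero_iff, sum_mulVec, dotProduct_sum,
    Finset.sum_eq_zero_iff_of_nonneg fun p hp ↦ (hA p hp).dotProduct_mulVec_nonneg v]
  exact forall₂_congr fun p hp ↦ (hA p hp).dotProduct_mulVec_zero_iff v

variable [DecidableEq n] {A : Matrix n n 𝕜} {μ : ℝ}

open scoped MatrixOrder in
theorem le_eigenvalues_of_posSemidef_sub_smul_one (hA : A.IsHermitian)
    (h : (A - μ • 1).PosSemidef) (i : n) :
    μ ≤ hA.eigenvalues i := by
  have hle : algebraMap ℝ (Matrix n n 𝕜) μ ≤ A := by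
    rwa [Algebra.algebraMap_eq_smul_one, Matrix.le_iff]
  exact (algebraMap_le_iff_le_spectrum hA).mp hle _ (hA.eigenvalues_mem_spectrum_real i)

theorem card_filter_eigenvalues_eq_finrank_eigenspace (hA : A.IsHermitian) :
    (Finset.univ.filter fun i ↦ hA.eigenvalues i = μ).card =
      finrank 𝕜 (eigenspace (toLin' A) (μ : 𝕜)) := by
  have hsymm := isSymmetric_toEuclideanLin_iff.mpr hA
  have hmap : eigenspace (toLin' A) (μ : 𝕜) =
      (eigenspace (toEuclideanLin A) (μ : 𝕜)).map
        (WithLp.linearEquiv 2 𝕜 (n → 𝕜)).toLinearMap := by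
    ext v
    simp [Submodule.mem_map_equiv, ← WithLp.toLp_smul]
  rw [hmap, LinearEquiv.finrank_map_eq,
    ← hsymm.card_filter_eigenvalues_eq finrank_euclideanSpace]
  refine Finset.card_equiv (Fintype.equivOfCardEq (Fintype.card_fin _)).symm fun i ↦ ?_
  simp only [Finset.mem_filter_univ, RCLike.ofReal_inj]
  rfl

end HermitianMatrix

section Pauli

variable {ι : Type*} [Fintype ι]

/-- The nontrivial additive character `t ↦ (-1)^t` of `𝔽₂`, recording the signs in products of
Pauli operators. -/
noncomputable def signChar : AddChar (ZMod 2) ℂ :=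
  AddChar.zmodChar 2 neg_one_sq

theorem signChar_one : signChar 1 = -1 :=
  (AddChar.zmodChar_apply' (n := 2) neg_one_sq 1).trans (pow_one _)

theorem star_signChar (t : ZMod 2) : star (signChar t) = signChar t := by
  simp [signChar, AddChar.zmodChar_apply]

variable [DecidableEq ι]

theorem pauliOp_apply (a b x y : ι → ZMod 2) :
    pauliOp a b x y = if x = y + a then signChar (b ⬝ᵥ y) else 0 := by
  have hcast : ((∑ i, (b i * y i).val : ℕ) : ZMod 2) = b ⬝ᵥ y := by simp [dotProduct]
  rw [← hcast, signChar, AddChar.zmodChar_apply']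
  rfl

theorem pauliOp_zero : pauliOp (0 : ι → ZMod 2) 0 = 1 := by
  ext x y
  simp [pauliOp_apply, one_apply]

theorem pauliOp_mul (a b c d : ι → ZMod 2) :
    pauliOp a b * pauliOp c d = signChar (b ⬝ᵥ c) • pauliOp (a + c) (b + d) := by
  ext x y
  simp only [mul_apply, pauliOp_apply, mul_ite, mul_zero, Finset.sum_ite_eq', Finset.mem_univ,
    if_true, Matrix.smul_apply, smul_eq_mul, dotProduct_add, add_dotProduct, AddChar.map_add_eq_mul,
    add_assoc, add_comm c a, ite_mul, zero_mul]
  split_ifs <;> ring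

theorem commute_pauliOp {a b c d : ι → ZMod 2} (h : b ⬝ᵥ c = d ⬝ᵥ a) :
    Commute (pauliOp a b) (pauliOp c d) := by
  rw [Commute, SemiconjBy, pauliOp_mul, pauliOp_mul, h, add_comm a, add_comm b]

theorem pauliOp_mul_eq_neg {a b c d : ι → ZMod 2} (h : b ⬝ᵥ c = d ⬝ᵥ a + 1) :
    pauliOp a b * pauliOp c d = -(pauliOp c d * pauliOp a b) := by
  rw [pauliOp_mul, pauliOp_mul, h, AddChar.map_add_eq_mul, signChar_one, mul_neg_one, neg_smul,
    add_comm a, add_comm b]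

theorem isHermitian_pauliOp {a b : ι → ZMod 2} (h : b ⬝ᵥ a = 0) : (pauliOp a b).IsHermitian := by
  ext x y
  have hxy : y = x + a ↔ x = y + a := by
    rw [← sub_eq_iff_eq_add, ZModModule.sub_eq_add, eq_comm]
  rw [conjTranspose_apply, pauliOp_apply, pauliOp_apply, apply_ite star, star_signChar, star_zero]
  refine ite_congr (propext hxy) (fun hx ↦ ?_) fun _ ↦ rfl
  rw [hx, dotProduct_add, h, add_zero]

theorem pauliOp_mul_self {a b : ι → ZMod 2} (h : b ⬝ᵥ a = 0) : pauliOp a b * pauliOp a b = 1 := by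
  rw [pauliOp_mul, h, ZModModule.add_self, ZModModule.add_self, AddChar.map_zero_eq_one, one_smul,
    pauliOp_zero]

theorem isUnit_pauliOp (a b : ι → ZMod 2) : IsUnit (pauliOp a b) := by
  refine IsUnit.of_mul_eq_one (signChar (b ⬝ᵥ a) • pauliOp a b) ?_
  rw [mul_smul_comm, pauliOp_mul, smul_smul, ← AddChar.map_add_eq_mul, CharTwo.add_self_eq_zero,
    AddChar.map_zero_eq_one, one_smul, ZModModule.add_self, ZModModule.add_self, pauliOp_zero]

theorem trace_eq_zero_of_mul_eq_neg {K n : Type*} [Field K] [CharZero K] [Fintype n]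
    [DecidableEq n] {A B : Matrix n n K} (hB : B * B = 1) (hAB : A * B = -(B * A)) :
    A.trace = 0 := by
  have htrace : A.trace = -A.trace := by
    calc A.trace = (A * B * B).trace := by rw [mul_assoc, hB, mul_one]
      _ = -(B * A * B).trace := by rw [hAB, neg_mul, trace_neg]
      _ = -A.trace := by rw [trace_mul_comm, ← mul_assoc, hB, one_mul]
  exact self_eq_neg.mp htrace

theorem trace_pauliOp (a b : ι → ZMod 2) :
    (pauliOp a b).trace = if a = 0 ∧ b = 0 then 2 ^ Fintype.card ι else 0 := by
  have heq_one : ∀ t : ZMod 2, t ≠ 0 → t = 1 := by decide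
  split_ifs with h
  · simp [h.1, h.2, pauliOp_zero]
  obtain ha | hb := not_and_or.mp h
  · obtain ⟨i, hi⟩ := Function.ne_iff.mp ha
    refine trace_eq_zero_of_mul_eq_neg (B := pauliOp 0 (Pi.single i 1))
      (pauliOp_mul_self (dotProduct_zero _)) (pauliOp_mul_eq_neg ?_)
    rw [dotProduct_zero, single_one_dotProduct, heq_one _ hi, CharTwo.add_self_eq_zero]
  · obtain ⟨i, hi⟩ := Function.ne_iff.mp hb
    refine trace_eq_zero_of_mul_eq_neg (B := pauliOp (Pi.single i 1) 0)
      (pauliOp_mul_self (zero_dotProduct _)) (pauliOp_mul_eq_neg ?_)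
    rw [dotProduct_single_one, zero_dotProduct, zero_add, heq_one _ hi]

end Pauli

theorem sum_trace_eq_card_mul_finrank_invariants {k G V : Type*} [Field k] [CharZero k] [Group G]
    [Fintype G] [AddCommGroup V] [Module k V] [FiniteDimensional k V] (ρ : Representation k G V) :
    ∑ g, LinearMap.trace k V (ρ g) = Fintype.card G * finrank k ρ.invariants := by
  have hcard : (Fintype.card G : k) ≠ 0 := Nat.cast_ne_zero.mpr Fintype.card_ne_zero
  let := invertibleOfNonzero hcard
  rw [← ρ.isProj_averageMap.trace]
  simp [Representation.averageMap, GroupAlgebra.average, map_sum, hcard]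

section CSSCode

variable {ι : Type*} [Fintype ι] [DecidableEq ι] {U V : Submodule (ZMod 2) (ι → ZMod 2)}

/-- The CSS stabilizer code with `X`-type stabilizers `X^a`, `a ∈ U`, and `Z`-type stabilizers
`Z^b`, `b ∈ V`: the vectors fixed by all of them. -/
def cssCode (U V : Submodule (ZMod 2) (ι → ZMod 2)) : Submodule ℂ ((ι → ZMod 2) → ℂ) :=
  (⨅ a ∈ U, eigenspace (toLin' (pauliOp a 0)) 1) ⊓ ⨅ b ∈ V, eigenspace (toLin' (pauliOp 0 b)) 1

theorem mem_cssCode {v : (ι → ZMod 2) → ℂ} :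
    v ∈ cssCode U V ↔ (∀ a ∈ U, pauliOp a 0 *ᵥ v = v) ∧ ∀ b ∈ V, pauliOp 0 b *ᵥ v = v := by
  simp [cssCode, Submodule.mem_iInf]

theorem forall_mem_span_mulVec_eq_self_iff {M n κ : Type*} [AddCommGroup M] [Module (ZMod 2) M]
    [Fintype n] [DecidableEq n] {P : M → Matrix n n ℂ} (hzero : P 0 = 1)
    (hadd : ∀ a b, P (a + b) = P a * P b) {a : κ → M} {v : n → ℂ} :
    (∀ u ∈ Submodule.span (ZMod 2) (Set.range a), P u *ᵥ v = v) ↔ ∀ p, P (a p) *ᵥ v = v := by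
  refine ⟨fun h p ↦ h _ (Submodule.subset_span ⟨p, rfl⟩), fun h u hu ↦ ?_⟩
  induction hu using Submodule.span_induction with
  | mem u hu =>
    obtain ⟨p, rfl⟩ := hu
    exact h p
  | zero => rw [hzero, one_mulVec]
  | add u u' _ _ hu hu' => rw [hadd, ← mulVec_mulVec, hu', hu]
  | smul c u _ hu =>
    obtain rfl | rfl : c = 0 ∨ c = 1 := by decide +revert
    · rw [zero_smul, hzero, one_mulVec]
    · rwa [one_smul]

theorem mem_cssCode_span_range {κ : Type*} {a b : κ → ι → ZMod 2} {v : (ι → ZMod 2) → ℂ} :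
    v ∈ cssCode (Submodule.span (ZMod 2) (Set.range a)) (Submodule.span (ZMod 2) (Set.range b)) ↔
      (∀ p, pauliOp (a p) 0 *ᵥ v = v) ∧ ∀ p, pauliOp 0 (b p) *ᵥ v = v := by
  rw [mem_cssCode, forall_mem_span_mulVec_eq_self_iff (P := (pauliOp · 0)) pauliOp_zero,
    forall_mem_span_mulVec_eq_self_iff (P := pauliOp 0) pauliOp_zero] <;>
  simp [pauliOp_mul]

theorem dotProduct_eq_zero_of_mem_span {R ι κ κ' : Type*} [CommSemiring R] [Fintype ι]
    {a : κ → ι → R} {b : κ' → ι → R} (h : ∀ p q, b q ⬝ᵥ a p = 0) :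
    ∀ u ∈ Submodule.span R (Set.range a), ∀ v ∈ Submodule.span R (Set.range b), v ⬝ᵥ u = 0 := by
  intro u hu v hv
  induction hu, hv using Submodule.span_induction₂ with
  | mem_mem u v hu hv =>
    obtain ⟨⟨p, rfl⟩, q, rfl⟩ := And.intro hu hv
    exact h p q
  | _ => simp_all

theorem mapsTo_cssCode_span_range {κ : Type*} {a b : κ → ι → ZMod 2}
    {A : Matrix (ι → ZMod 2) (ι → ZMod 2) ℂ} (ha : ∀ p, Commute (pauliOp (a p) 0) A)
    (hb : ∀ p, Commute (pauliOp 0 (b p)) A) :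
    Set.MapsTo (toLin' A)
      (cssCode (Submodule.span (ZMod 2) (Set.range a))
        (Submodule.span (ZMod 2) (Set.range b)))
      (cssCode (Submodule.span (ZMod 2) (Set.range a))
        (Submodule.span (ZMod 2) (Set.range b))) := by
  simp only [Set.MapsTo, SetLike.mem_coe, mem_cssCode_span_range, toLin'_apply, mulVec_mulVec]
  refine fun v hv ↦ ⟨fun p ↦ ?_, fun p ↦ ?_⟩
  · rw [(ha p).eq, ← mulVec_mulVec, hv.1 p]
  · rw [(hb p).eq, ← mulVec_mulVec, hv.2 p]

/-- The representation `(a, b) ↦ X^a Z^b` of the stabilizer group of a CSS code; orthogonality of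
`U` and `V` makes it multiplicative without signs. -/
def cssRep (hUV : ∀ a ∈ U, ∀ b ∈ V, b ⬝ᵥ a = 0) :
    Representation ℂ (Multiplicative (U × V)) ((ι → ZMod 2) → ℂ) where
  toFun g := toLin' (pauliOp (g.toAdd.1 : ι → ZMod 2) g.toAdd.2)
  map_one' := by simp [pauliOp_zero, End.one_eq_id]
  map_mul' g h := by
    rw [End.mul_eq_comp, ← toLin'_mul, pauliOp_mul, hUV _ h.toAdd.1.2 _ g.toAdd.2.2,
      AddChar.map_zero_eq_one, one_smul]
    rfl

theorem invariants_cssRep (hUV : ∀ a ∈ U, ∀ b ∈ V, b ⬝ᵥ a = 0) :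
    (cssRep hUV).invariants = cssCode U V := by
  ext v
  rw [Representation.mem_invariants, mem_cssCode]
  refine ⟨fun h ↦ ⟨fun a ha ↦ h (.ofAdd (⟨a, ha⟩, 0)), fun b hb ↦ h (.ofAdd (0, ⟨b, hb⟩))⟩, ?_⟩
  rintro ⟨hU, hV⟩ g
  have hmul : pauliOp (g.toAdd.1 : ι → ZMod 2) g.toAdd.2 =
      pauliOp (g.toAdd.1 : ι → ZMod 2) 0 * pauliOp 0 g.toAdd.2 := by simp [pauliOp_mul]
  change pauliOp (g.toAdd.1 : ι → ZMod 2) g.toAdd.2 *ᵥ v = v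
  rw [hmul, ← mulVec_mulVec, hV _ g.toAdd.2.2, hU _ g.toAdd.1.2]

theorem two_pow_mul_finrank_cssCode (hUV : ∀ a ∈ U, ∀ b ∈ V, b ⬝ᵥ a = 0) :
    2 ^ (finrank (ZMod 2) U + finrank (ZMod 2) V) * finrank ℂ (cssCode U V) =
      2 ^ Fintype.card ι := by
  classical
  have hcard : Fintype.card (Multiplicative (U × V)) =
      2 ^ (finrank (ZMod 2) U + finrank (ZMod 2) V) := by
    rw [Fintype.card_multiplicative, Module.card_eq_pow_finrank (K := ZMod 2), ZMod.card,
      Module.finrank_prod]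
  have htrace (g : Multiplicative (U × V)) : LinearMap.trace ℂ _ (cssRep hUV g) =
      if g = 1 then 2 ^ Fintype.card ι else 0 := by
    change LinearMap.trace ℂ _ (toLin' (pauliOp (g.toAdd.1 : ι → ZMod 2) g.toAdd.2)) = _
    rw [trace_toLin'_eq, trace_pauliOp]
    refine if_congr ?_ rfl rfl
    rw [ZeroMemClass.coe_eq_zero, ZeroMemClass.coe_eq_zero, ← toAdd_eq_zero, Prod.ext_iff]
    rfl
  have hsum := sum_trace_eq_card_mul_finrank_invariants (cssRep hUV)
  simp only [htrace, Finset.sum_ite_eq', Finset.mem_univ, if_true, hcard] at hsum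
  rw [← invariants_cssRep hUV]
  exact_mod_cast hsum.symm

end CSSCode

section PlaquetteGap

variable {R : Type*} [Ring R] [Algebra ℝ R] {X X' Z Z' : R}

theorem sq_add_sq_add_sq_eq_smul_gap (hX : X * X = 1) (hX' : X' * X' = 1) (hZ : Z * Z = 1)
    (hZ' : Z' * Z' = 1) (hXX' : Commute X X') (hZZ' : Commute Z Z') (hXZ : X * Z = -(Z * X))
    (hXZ' : X * Z' = -(Z' * X)) (hX'Z : X' * Z = -(Z * X')) (hX'Z' : X' * Z' = -(Z' * X')) :
    ((2 * √2) • 1 - (X + X' + Z + Z')) * ((2 * √2) • 1 - (X + X' + Z + Z')) +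
      (1 - X * X') * (1 - X * X') + (1 - Z * Z') * (1 - Z * Z') =
    (4 * √2) • ((2 * √2) • 1 - (X + X' + Z + Z')) := by
  have hK : (X + X' + Z + Z') * (X + X' + Z + Z') =
      (4 : ℝ) • 1 + (2 : ℝ) • (X * X') + (2 : ℝ) • (Z * Z') := by
    simp only [add_mul, mul_add, hX, hX', hZ, hZ', hXZ, hXZ', hX'Z, hX'Z', ← hXX'.eq, ← hZZ'.eq]
    module
  have hS : X * X' * (X * X') = 1 := by
    rw [hXX'.symm.mul_mul_mul_comm, hX, hX', one_mul]
  have hT : Z * Z' * (Z * Z') = 1 := by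
    rw [hZZ'.symm.mul_mul_mul_comm, hZ, hZ', one_mul]
  have hsqrt : √2 * √2 = 2 := Real.mul_self_sqrt zero_le_two
  simp only [sub_mul, mul_sub, hK, hS, hT, smul_mul_assoc, mul_smul_comm, one_mul, mul_one]
  match_scalars <;> linarith

end PlaquetteGap

/-- Supports of the gauge generators of a subsystem code in which each plaquette `p : κ` carries
two `X`-type generators `X^(x p)`, `X^(x' p)` and two `Z`-type generators `Z^(z p)`, `Z^(z' p)`,
with an `X`-type and a `Z`-type generator anticommuting exactly when they share their plaquette. -/
structure GaugeFrame (ι κ : Type*) [Fintype ι] [DecidableEq κ] where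
  x : κ → ι → ZMod 2
  x' : κ → ι → ZMod 2
  z : κ → ι → ZMod 2
  z' : κ → ι → ZMod 2
  z_dotProduct_x (p q : κ) : z p ⬝ᵥ x q = if p = q then 1 else 0
  z_dotProduct_x' (p q : κ) : z p ⬝ᵥ x' q = if p = q then 1 else 0
  z'_dotProduct_x (p q : κ) : z' p ⬝ᵥ x q = if p = q then 1 else 0
  z'_dotProduct_x' (p q : κ) : z' p ⬝ᵥ x' q = if p = q then 1 else 0

namespace GaugeFrame

variable {ι κ : Type*} [Fintype ι] [DecidableEq κ] (F : GaugeFrame ι κ)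

/-- Support of the `X`-type stabilizer of a plaquette. -/
def xStab (p : κ) : ι → ZMod 2 := F.x p + F.x' p

/-- Support of the `Z`-type stabilizer of a plaquette. -/
def zStab (p : κ) : ι → ZMod 2 := F.z p + F.z' p

theorem z_dotProduct_xStab (p q : κ) : F.z p ⬝ᵥ F.xStab q = 0 := by
  rw [xStab, dotProduct_add, F.z_dotProduct_x, F.z_dotProduct_x', CharTwo.add_self_eq_zero]

theorem z'_dotProduct_xStab (p q : κ) : F.z' p ⬝ᵥ F.xStab q = 0 := by
  rw [xStab, dotProduct_add, F.z'_dotProduct_x, F.z'_dotProduct_x', CharTwo.add_self_eq_zero]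

theorem zStab_dotProduct_x (p q : κ) : F.zStab p ⬝ᵥ F.x q = 0 := by
  rw [zStab, add_dotProduct, F.z_dotProduct_x, F.z'_dotProduct_x, CharTwo.add_self_eq_zero]

theorem zStab_dotProduct_xStab (p q : κ) : F.zStab p ⬝ᵥ F.xStab q = 0 := by
  rw [zStab, add_dotProduct, z_dotProduct_xStab, z'_dotProduct_xStab, add_zero]

variable [DecidableEq ι]

/-- The simultaneous `+1` eigenspace of all stabilizers: the trivial syndrome sector. -/
def stabilizerCode : Submodule ℂ ((ι → ZMod 2) → ℂ) :=
  cssCode (.span (ZMod 2) (Set.range F.xStab)) (.span (ZMod 2) (Set.range F.zStab))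

/-- The observable `(X̄_p + Z̄_p) / √2` of the gauge qubit of plaquette `p`, whose `+1` eigenstate
is its ground state in the trivial syndrome sector. -/
noncomputable def gaugeOp (p : κ) : Matrix (ι → ZMod 2) (ι → ZMod 2) ℂ :=
  (√2)⁻¹ • (pauliOp (F.x p) 0 + pauliOp 0 (F.z p))

/-- The excess `2√2 - G(p)` of the energy of plaquette `p` over its minimum `-2√2`, where `G(p)` is
the sum of the four generators of `p`. -/
noncomputable def localGap (p : κ) : Matrix (ι → ZMod 2) (ι → ZMod 2) ℂ :=
  (2 * √2) • 1 - (pauliOp (F.x p) 0 + pauliOp (F.x' p) 0 + pauliOp 0 (F.z p) + pauliOp 0 (F.z' p))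

theorem pauliOp_x_mul_pauliOp_x' (p : κ) :
    pauliOp (F.x p) 0 * pauliOp (F.x' p) 0 = pauliOp (F.xStab p) 0 := by
  simp [pauliOp_mul, xStab]

theorem pauliOp_z_mul_pauliOp_z' (p : κ) :
    pauliOp 0 (F.z p) * pauliOp 0 (F.z' p) = pauliOp 0 (F.zStab p) := by
  simp [pauliOp_mul, zStab]

theorem isHermitian_localGap (p : κ) : (F.localGap p).IsHermitian := by
  have hX (a : ι → ZMod 2) : (pauliOp a 0).IsHermitian := isHermitian_pauliOp (zero_dotProduct a)
  have hZ (b : ι → ZMod 2) : (pauliOp 0 b).IsHermitian := isHermitian_pauliOp (dotProduct_zero b)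
  exact (isHermitian_one.smul (IsSelfAdjoint.all _)).sub
    ((((hX _).add (hX _)).add (hZ _)).add (hZ _))

theorem smul_localGap_eq_sum (p : κ) :
    (4 * √2) • F.localGap p = (F.localGap p)ᴴ * F.localGap p +
      (1 - pauliOp (F.xStab p) 0)ᴴ * (1 - pauliOp (F.xStab p) 0) +
      (1 - pauliOp 0 (F.zStab p))ᴴ * (1 - pauliOp 0 (F.zStab p)) := by
  have hX (a : ι → ZMod 2) : pauliOp a 0 * pauliOp a 0 = 1 := pauliOp_mul_self (zero_dotProduct a)
  have hZ (b : ι → ZMod 2) : pauliOp 0 b * pauliOp 0 b = 1 := pauliOp_mul_self (dotProduct_zero b)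
  have hXX (a c : ι → ZMod 2) : Commute (pauliOp a 0) (pauliOp c 0) := commute_pauliOp (by simp)
  have hZZ (b d : ι → ZMod 2) : Commute (pauliOp 0 b) (pauliOp 0 d) := commute_pauliOp (by simp)
  have hXZ {a b : ι → ZMod 2} (h : b ⬝ᵥ a = if p = p then 1 else 0) :
      pauliOp a 0 * pauliOp 0 b = -(pauliOp 0 b * pauliOp a 0) :=
    pauliOp_mul_eq_neg (by rw [h, if_pos rfl, zero_dotProduct, CharTwo.add_self_eq_zero])
  rw [(F.isHermitian_localGap p).eq,
    (isHermitian_one.sub (isHermitian_pauliOp (zero_dotProduct (F.xStab p)))).eq,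
    (isHermitian_one.sub (isHermitian_pauliOp (dotProduct_zero (F.zStab p)))).eq,
    ← pauliOp_x_mul_pauliOp_x', ← pauliOp_z_mul_pauliOp_z']
  exact (sq_add_sq_add_sq_eq_smul_gap (hX _) (hX _) (hZ _) (hZ _) (hXX _ _) (hZZ _ _)
    (hXZ (F.z_dotProduct_x p p)) (hXZ (F.z'_dotProduct_x p p)) (hXZ (F.z_dotProduct_x' p p))
    (hXZ (F.z'_dotProduct_x' p p))).symm

theorem posSemidef_localGap (p : κ) : (F.localGap p).PosSemidef := by
  rw [← inv_smul_smul₀ (by positivity : 4 * √2 ≠ 0) (F.localGap p), smul_localGap_eq_sum]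
  exact PosSemidef.smul (((posSemidef_conjTranspose_mul_self _).add
    (posSemidef_conjTranspose_mul_self _)).add (posSemidef_conjTranspose_mul_self _))
    (by positivity : (0 : ℝ) ≤ (4 * √2)⁻¹)

theorem stabilizers_mulVec_of_localGap_mulVec_eq_zero {p : κ} {v : (ι → ZMod 2) → ℂ}
    (hv : F.localGap p *ᵥ v = 0) :
    pauliOp (F.xStab p) 0 *ᵥ v = v ∧ pauliOp 0 (F.zStab p) *ᵥ v = v := by
  have hsum := congrArg (· *ᵥ v) (F.smul_localGap_eq_sum p)
  simp only [smul_mulVec, hv, smul_zero] at hsum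
  obtain ⟨h, hZ⟩ := (add_mulVec_eq_zero_iff_of_posSemidef
    ((posSemidef_conjTranspose_mul_self _).add (posSemidef_conjTranspose_mul_self _))
    (posSemidef_conjTranspose_mul_self _)).mp hsum.symm
  have hX := ((add_mulVec_eq_zero_iff_of_posSemidef (posSemidef_conjTranspose_mul_self _)
    (posSemidef_conjTranspose_mul_self _)).mp h).2
  rw [conjTranspose_mul_self_mulVec_eq_zero, sub_mulVec, one_mulVec, sub_eq_zero] at hX hZ
  exact ⟨hX.symm, hZ.symm⟩

theorem localGap_mulVec_of_stabilizers_mulVec {p : κ} {v : (ι → ZMod 2) → ℂ}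
    (hX : pauliOp (F.xStab p) 0 *ᵥ v = v) (hZ : pauliOp 0 (F.zStab p) *ᵥ v = v) :
    F.localGap p *ᵥ v = (2 * √2) • (v - F.gaugeOp p *ᵥ v) := by
  have hX' : pauliOp (F.x' p) 0 *ᵥ v = pauliOp (F.x p) 0 *ᵥ v := by
    have hmul : pauliOp (F.x p) 0 * pauliOp (F.xStab p) 0 = pauliOp (F.x' p) 0 := by
      simp [pauliOp_mul, xStab, ← add_assoc, ZModModule.add_self]
    rw [← hmul, ← mulVec_mulVec, hX]
  have hZ' : pauliOp 0 (F.z' p) *ᵥ v = pauliOp 0 (F.z p) *ᵥ v := by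
    have hmul : pauliOp 0 (F.z p) * pauliOp 0 (F.zStab p) = pauliOp 0 (F.z' p) := by
      simp [pauliOp_mul, zStab, ← add_assoc, ZModModule.add_self]
    rw [← hmul, ← mulVec_mulVec, hZ]
  rw [localGap, gaugeOp]
  simp only [sub_mulVec, add_mulVec, smul_mulVec, one_mulVec, hX', hZ']
  match_scalars <;> field_simp <;> norm_num

theorem localGap_mulVec_eq_zero_iff (p : κ) {v : (ι → ZMod 2) → ℂ} :
    F.localGap p *ᵥ v = 0 ↔ (pauliOp (F.xStab p) 0 *ᵥ v = v ∧ pauliOp 0 (F.zStab p) *ᵥ v = v) ∧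
      F.gaugeOp p *ᵥ v = v := by
  have hgauge (h : pauliOp (F.xStab p) 0 *ᵥ v = v ∧ pauliOp 0 (F.zStab p) *ᵥ v = v) :
      F.localGap p *ᵥ v = 0 ↔ F.gaugeOp p *ᵥ v = v := by
    rw [F.localGap_mulVec_of_stabilizers_mulVec h.1 h.2, smul_eq_zero_iff_right (by positivity),
      sub_eq_zero, eq_comm]
  refine ⟨fun hv ↦ ?_, fun hv ↦ (hgauge hv.1).mpr hv.2⟩
  have hstab := F.stabilizers_mulVec_of_localGap_mulVec_eq_zero hv
  exact ⟨hstab, (hgauge hstab).mp hv⟩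

theorem gaugeOp_mul_self (p : κ) : F.gaugeOp p * F.gaugeOp p = 1 := by
  have hX : pauliOp (F.x p) 0 * pauliOp (F.x p) 0 = 1 := pauliOp_mul_self (zero_dotProduct _)
  have hZ : pauliOp 0 (F.z p) * pauliOp 0 (F.z p) = 1 := pauliOp_mul_self (dotProduct_zero _)
  have hXZ : pauliOp (F.x p) 0 * pauliOp 0 (F.z p) = -(pauliOp 0 (F.z p) * pauliOp (F.x p) 0) :=
    pauliOp_mul_eq_neg (by
      rw [F.z_dotProduct_x, if_pos rfl, zero_dotProduct, CharTwo.add_self_eq_zero])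
  have hsqrt : √2 * √2 = 2 := Real.mul_self_sqrt zero_le_two
  simp only [gaugeOp, smul_mul_smul, add_mul, mul_add, hX, hZ, hXZ, ← mul_inv, hsqrt]
  module

theorem gaugeOp_mul_pauliOp_eq_neg (p : κ) :
    F.gaugeOp p * pauliOp (F.x p) (F.z p) = -(pauliOp (F.x p) (F.z p) * F.gaugeOp p) := by
  have hzx : F.z p ⬝ᵥ F.x p = 1 := (F.z_dotProduct_x p p).trans (if_pos rfl)
  have hX : pauliOp (F.x p) 0 * pauliOp (F.x p) (F.z p) =
      -(pauliOp (F.x p) (F.z p) * pauliOp (F.x p) 0) :=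
    pauliOp_mul_eq_neg (by rw [hzx, zero_dotProduct, CharTwo.add_self_eq_zero])
  have hZ : pauliOp 0 (F.z p) * pauliOp (F.x p) (F.z p) =
      -(pauliOp (F.x p) (F.z p) * pauliOp 0 (F.z p)) :=
    pauliOp_mul_eq_neg (by rw [hzx, dotProduct_zero, zero_add])
  rw [gaugeOp, smul_mul_assoc, mul_smul_comm, add_mul, mul_add, hX, hZ, ← neg_add, smul_neg]

theorem commute_pauliOp_gaugeOp {p : κ} {a b : ι → ZMod 2} (hx : b ⬝ᵥ F.x p = 0)
    (hz : F.z p ⬝ᵥ a = 0) :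
    Commute (pauliOp a b) (F.gaugeOp p) :=
  ((commute_pauliOp (by rw [hx, zero_dotProduct])).add_right
    (commute_pauliOp (by rw [hz, dotProduct_zero]))).smul_right _

theorem commute_gaugeOp_gaugeOp {p q : κ} (hpq : p ≠ q) : Commute (F.gaugeOp p) (F.gaugeOp q) := by
  refine ((F.commute_pauliOp_gaugeOp (zero_dotProduct _) ?_).add_left
    (F.commute_pauliOp_gaugeOp ?_ (dotProduct_zero _))).smul_left _
  · rw [F.z_dotProduct_x, if_neg hpq.symm]
  · rw [F.z_dotProduct_x, if_neg hpq]

variable [Fintype κ]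

/-- Minus the sum of all gauge generators, four for each plaquette. -/
noncomputable def ham : Matrix (ι → ZMod 2) (ι → ZMod 2) ℂ :=
  -∑ p, (pauliOp (F.x p) 0 + pauliOp (F.x' p) 0 + pauliOp 0 (F.z p) + pauliOp 0 (F.z' p))

theorem ham_sub_smul_one :
    F.ham - (-(2 * √2 * Fintype.card κ)) • 1 = ∑ p, F.localGap p := by
  simp only [ham, localGap, Finset.sum_sub_distrib, Finset.sum_const, Finset.card_univ]
  module

theorem isHermitian_ham : F.ham.IsHermitian := by
  rw [sub_eq_iff_eq_add.mp F.ham_sub_smul_one]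
  exact (posSemidef_sum _ fun p _ ↦ F.posSemidef_localGap p).isHermitian.add
    (isHermitian_one.smul (IsSelfAdjoint.all _))

theorem le_eigenvalues_ham (i : ι → ZMod 2) :
    -(2 * √2 * Fintype.card κ) ≤ F.isHermitian_ham.eigenvalues i :=
  le_eigenvalues_of_posSemidef_sub_smul_one _
    (F.ham_sub_smul_one ▸ posSemidef_sum _ fun p _ ↦ F.posSemidef_localGap p) i

theorem eigenspace_ham :
    eigenspace (toLin' F.ham) ((-(2 * √2 * Fintype.card κ) : ℝ) : ℂ) =
      F.stabilizerCode ⊓ ⨅ p ∈ Finset.univ, eigenspace (toLin' (F.gaugeOp p)) 1 := by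
  ext v
  have hker : v ∈ eigenspace (toLin' F.ham) ((-(2 * √2 * Fintype.card κ) : ℝ) : ℂ) ↔
      (∑ p, F.localGap p) *ᵥ v = 0 := by
    rw [← ham_sub_smul_one, Module.End.mem_eigenspace_iff, sub_mulVec, smul_mulVec, one_mulVec,
      sub_eq_zero, toLin'_apply, Complex.coe_smul]
  rw [hker, sum_mulVec_eq_zero_iff_of_posSemidef _ fun p _ ↦ F.posSemidef_localGap p]
  simp [localGap_mulVec_eq_zero_iff, stabilizerCode, mem_cssCode_span_range, forall_and,
    Submodule.mem_iInf]

theorem two_pow_card_mul_finrank_eigenspace_ham :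
    2 ^ Fintype.card κ *
        finrank ℂ (eigenspace (toLin' F.ham) ((-(2 * √2 * Fintype.card κ) : ℝ) : ℂ)) =
      finrank ℂ F.stabilizerCode := by
  rw [eigenspace_ham, ← Finset.card_univ]
  have hdiag {p q : κ} (hpq : p ≠ q) : F.z p ⬝ᵥ F.x q = 0 :=
    (F.z_dotProduct_x p q).trans (if_neg hpq)
  refine two_pow_card_mul_finrank_inf_iInf_eigenspace_one
    (y := fun p ↦ toLin' (pauliOp (F.x p) (F.z p))) Finset.univ (fun p ↦ ?_) (fun p ↦ ?_)
    (fun p ↦ ?_) (fun p q hpq ↦ ?_) (fun p q hpq ↦ ?_) (fun p _ ↦ ?_) (fun p _ ↦ ?_)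
  · rw [End.mul_eq_comp, ← toLin'_mul, gaugeOp_mul_self, toLin'_one, End.one_eq_id]
  · exact (isUnit_pauliOp _ _).map toLinAlgEquiv'
  · rw [End.mul_eq_comp, ← toLin'_mul, gaugeOp_mul_pauliOp_eq_neg, map_neg, toLin'_mul,
      End.mul_eq_comp]
  · exact (F.commute_gaugeOp_gaugeOp hpq).map toLinAlgEquiv'
  · exact (F.commute_pauliOp_gaugeOp (hdiag hpq.symm) (hdiag hpq)).symm.map toLinAlgEquiv'
  · exact mapsTo_cssCode_span_range
      (fun q ↦ F.commute_pauliOp_gaugeOp (zero_dotProduct _) (F.z_dotProduct_xStab p q))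
      (fun q ↦ F.commute_pauliOp_gaugeOp (F.zStab_dotProduct_x q p) (dotProduct_zero _))
  · exact mapsTo_cssCode_span_range
      (fun q ↦ commute_pauliOp (by rw [zero_dotProduct, z_dotProduct_xStab]))
      (fun q ↦ commute_pauliOp (by rw [dotProduct_zero, zStab_dotProduct_x]))

theorem two_pow_mul_finrank_eigenspace_ham :
    2 ^ (finrank (ZMod 2) (Submodule.span (ZMod 2) (Set.range F.xStab)) +
          finrank (ZMod 2) (Submodule.span (ZMod 2) (Set.range F.zStab)) + Fintype.card κ) *
        finrank ℂ (eigenspace (toLin' F.ham) ((-(2 * √2 * Fintype.card κ) : ℝ) : ℂ)) =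
      2 ^ Fintype.card ι := by
  rw [pow_add, mul_assoc, two_pow_card_mul_finrank_eigenspace_ham, stabilizerCode,
    two_pow_mul_finrank_cssCode]
  exact dotProduct_eq_zero_of_mem_span fun p q ↦ F.zStab_dotProduct_xStab q p

end GaugeFrame

section Translates

variable {I Γ : Type*} [AddCommGroup Γ]

theorem periodic_of_mem_closure {α : Type*} {f : Γ → α} {S : Set Γ}
    (hf : ∀ c ∈ S, Function.Periodic f c) {c : Γ} (hc : c ∈ AddSubgroup.closure S) :
    Function.Periodic f c := by
  induction hc using AddSubgroup.closure_induction with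
  | mem c hc => exact hf c hc
  | zero => exact Function.periodic_with_period_zero f
  | add c c' _ _ hc hc' => exact hc.add_period hc'
  | neg c _ hc => exact hc.neg

variable [DecidableEq Γ]

/-- The indicator vector in `I × Γ` of the translate by `p` of the set `{(i, d i) | i : I}`. -/
def offsetVec (d : I → Γ) (p : Γ) : I × Γ → ZMod 2 :=
  fun q ↦ if q.2 = p + d q.1 then 1 else 0

theorem offsetVec_dotProduct_offsetVec [Fintype I] [Fintype Γ] (d e : I → Γ) (p q : Γ) :
    offsetVec d p ⬝ᵥ offsetVec e q = ∑ i, if p - q = e i - d i then 1 else 0 := by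
  simp only [dotProduct, offsetVec, Fintype.sum_prod_type, ite_mul, one_mul, zero_mul,
    Finset.sum_ite_eq', Finset.mem_univ, if_true]
  refine Finset.sum_congr rfl fun i _ ↦ if_congr ?_ rfl rfl
  rw [sub_eq_sub_iff_add_eq_add, add_comm q]

variable [Fintype Γ]

theorem sum_smul_offsetVec (d : I → Γ) (s : Γ → ZMod 2) (i : I) (x : Γ) :
    (∑ p, s p • offsetVec d p) (i, x) = s (x - d i) := by
  simp [offsetVec, Finset.sum_apply, ← sub_eq_iff_eq_add]

theorem mem_ker_linearCombination_offsetVec_add {d e : I → Γ} {s : Γ → ZMod 2} :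
    s ∈ LinearMap.ker
        (Fintype.linearCombination (ZMod 2) fun p ↦ offsetVec d p + offsetVec e p) ↔
      ∀ c ∈ Set.range (d - e), Function.Periodic s c := by
  simp only [LinearMap.mem_ker, Fintype.linearCombination_apply, smul_add, Finset.sum_add_distrib,
    funext_iff, Prod.forall, Pi.add_apply, sum_smul_offsetVec, Pi.zero_apply,
    CharTwo.add_eq_zero, Set.forall_mem_range, Pi.sub_apply]
  refine forall_congr' fun i ↦ ⟨fun h x ↦ ?_, fun h x ↦ ?_⟩
  · simpa [add_sub_assoc] using (h (x + d i)).symm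
  · simpa using (h (x - d i)).symm

theorem ker_linearCombination_offsetVec_add {d e : I → Γ}
    (hde : AddSubgroup.closure (Set.range (d - e)) = ⊤) :
    LinearMap.ker (Fintype.linearCombination (ZMod 2) fun p ↦ offsetVec d p + offsetVec e p) =
      Submodule.span (ZMod 2) {1} := by
  ext s
  rw [mem_ker_linearCombination_offsetVec_add, Submodule.mem_span_singleton]
  refine ⟨fun h ↦ ⟨s 0, funext fun x ↦ ?_⟩, ?_⟩
  · have hx : Function.Periodic s x := periodic_of_mem_closure h (hde ▸ AddSubgroup.mem_top x)
    rw [hx.eq]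
    exact mul_one _
  · rintro ⟨c, rfl⟩ _ _ x
    rfl

theorem finrank_span_range_offsetVec_add_add_one {d e : I → Γ}
    (hde : AddSubgroup.closure (Set.range (d - e)) = ⊤) :
    finrank (ZMod 2)
        (Submodule.span (ZMod 2) (Set.range fun p ↦ offsetVec d p + offsetVec e p)) + 1 =
      Fintype.card Γ := by
  rw [← Fintype.range_linearCombination]
  have := LinearMap.finrank_range_add_finrank_ker
    (Fintype.linearCombination (ZMod 2) fun p ↦ offsetVec d p + offsetVec e p)
  rwa [ker_linearCombination_offsetVec_add hde, finrank_span_singleton one_ne_zero,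
    Module.finrank_fintype_fun_eq_card] at this

end Translates

section Torus

theorem ind_TSW (L : ℕ) (p : ZMod L × ZMod L) : ind (TSW L p) = offsetVec ![0, 0, 0] p := by
  ext ⟨i, q⟩
  fin_cases i <;> simp [ind, TSW, offsetVec]

theorem ind_TNE (L : ℕ) (p : ZMod L × ZMod L) :
    ind (TNE L p) = offsetVec ![(1, 1), (0, 1), (1, 0)] p := by
  ext ⟨i, q⟩
  fin_cases i <;> simp [ind, TNE, offsetVec, Prod.ext_iff]

theorem ind_TSE (L : ℕ) (p : ZMod L × ZMod L) :
    ind (TSE L p) = offsetVec ![(1, 0), 0, (1, 0)] p := by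
  ext ⟨i, q⟩
  fin_cases i <;> simp [ind, TSE, offsetVec, Prod.ext_iff]

theorem ind_TNW (L : ℕ) (p : ZMod L × ZMod L) :
    ind (TNW L p) = offsetVec ![(0, 1), (0, 1), 0] p := by
  ext ⟨i, q⟩
  fin_cases i <;> simp [ind, TNW, offsetVec, Prod.ext_iff]

/-- The gauge generators of the subsystem toric code: the four triangles of each plaquette. -/
def toricFrame (L : ℕ) [NeZero L] : GaugeFrame (Q L) (ZMod L × ZMod L) where
  x p := ind (TSW L p)
  x' p := ind (TNE L p)
  z p := ind (TSE L p)
  z' p := ind (TNW L p)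
  z_dotProduct_x p q := by
    rw [ind_TSE, ind_TSW, offsetVec_dotProduct_offsetVec, Fin.sum_univ_three, add_right_comm]
    simp [sub_eq_zero, CharTwo.add_self_eq_zero]
  z_dotProduct_x' p q := by
    rw [ind_TSE, ind_TNE, offsetVec_dotProduct_offsetVec, Fin.sum_univ_three]
    simp [sub_eq_zero, CharTwo.add_self_eq_zero]
  z'_dotProduct_x p q := by
    rw [ind_TNW, ind_TSW, offsetVec_dotProduct_offsetVec, Fin.sum_univ_three]
    simp [sub_eq_zero, CharTwo.add_self_eq_zero]
  z'_dotProduct_x' p q := by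
    rw [ind_TNW, ind_TNE, offsetVec_dotProduct_offsetVec, Fin.sum_univ_three, add_right_comm]
    simp [sub_eq_zero, CharTwo.add_self_eq_zero]

theorem ham_toricFrame (L : ℕ) [NeZero L] : (toricFrame L).ham = Ham L :=
  rfl

theorem addSubgroup_eq_top_of_mem {L : ℕ} {H : AddSubgroup (ZMod L × ZMod L)}
    (h₁ : (1, 0) ∈ H) (h₂ : (0, 1) ∈ H) : H = ⊤ := by
  rw [AddSubgroup.eq_top_iff']
  rintro ⟨a, b⟩
  obtain ⟨a, rfl⟩ := ZMod.intCast_surjective a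
  obtain ⟨b, rfl⟩ := ZMod.intCast_surjective b
  simpa using H.add_mem (H.zsmul_mem h₁ a) (H.zsmul_mem h₂ b)

theorem finrank_span_xStab_toricFrame_add_one (L : ℕ) [NeZero L] :
    finrank (ZMod 2) (Submodule.span (ZMod 2) (Set.range (toricFrame L).xStab)) + 1 = L ^ 2 := by
  have hstab : (toricFrame L).xStab =
      fun p ↦ offsetVec ![0, 0, 0] p + offsetVec ![(1, 1), (0, 1), (1, 0)] p :=
    funext fun p ↦ congrArg₂ _ (ind_TSW L p) (ind_TNE L p)
  rw [hstab, finrank_span_range_offsetVec_add_add_one, Fintype.card_prod, ZMod.card, sq]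
  refine addSubgroup_eq_top_of_mem
    (neg_mem_iff.mp (AddSubgroup.subset_closure ⟨2, ?_⟩))
    (neg_mem_iff.mp (AddSubgroup.subset_closure ⟨1, ?_⟩)) <;> simp

theorem finrank_span_zStab_toricFrame_add_one (L : ℕ) [NeZero L] :
    finrank (ZMod 2) (Submodule.span (ZMod 2) (Set.range (toricFrame L).zStab)) + 1 = L ^ 2 := by
  have hstab : (toricFrame L).zStab =
      fun p ↦ offsetVec ![(1, 0), 0, (1, 0)] p + offsetVec ![(0, 1), (0, 1), 0] p :=
    funext fun p ↦ congrArg₂ _ (ind_TSE L p) (ind_TNW L p)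
  rw [hstab, finrank_span_range_offsetVec_add_add_one, Fintype.card_prod, ZMod.card, sq]
  refine addSubgroup_eq_top_of_mem
    (AddSubgroup.subset_closure ⟨2, ?_⟩)
    (neg_mem_iff.mp (AddSubgroup.subset_closure ⟨1, ?_⟩)) <;> simp

theorem finrank_eigenspace_ham_toricFrame (L : ℕ) [NeZero L] :
    finrank ℂ (eigenspace (toLin' (toricFrame L).ham)
      ((-(2 * √2 * Fintype.card (ZMod L × ZMod L)) : ℝ) : ℂ)) = 4 := by
  have hX := finrank_span_xStab_toricFrame_add_one L
  have hZ := finrank_span_zStab_toricFrame_add_one L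
  have hplaquette : Fintype.card (ZMod L × ZMod L) = L ^ 2 := by
    rw [Fintype.card_prod, ZMod.card, sq]
  have hqubit : Fintype.card (Q L) = finrank (ZMod 2) (Submodule.span (ZMod 2)
      (Set.range (toricFrame L).xStab)) + finrank (ZMod 2) (Submodule.span (ZMod 2)
      (Set.range (toricFrame L).zStab)) + Fintype.card (ZMod L × ZMod L) + 2 := by
    rw [Fintype.card_prod, Fintype.card_fin]
    lia
  have hdim := (toricFrame L).two_pow_mul_finrank_eigenspace_ham
  rw [hqubit, pow_add _ _ 2] at hdim
  exact mul_left_cancel₀ (by positivity) hdim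

end Torus

/-- the ground state energy of the subsystem toric code Hamiltonian
`H = −∑_T G(T)` on the `L × L` torus is `E₀ = −2√2 L²`, and the ground space is four-fold
degenerate. -/
theorem ground_energy_and_degeneracy (L : ℕ) [NeZero L] (hL : 2 ≤ L) :
    ∃ hH : (Ham L).IsHermitian,
      (∀ i, -(2 * Real.sqrt 2 * (L : ℝ) ^ 2) ≤ hH.eigenvalues i) ∧
      (Finset.univ.filter fun i =>
        hH.eigenvalues i = -(2 * Real.sqrt 2 * (L : ℝ) ^ 2)).card = 4 := by
  have hcard : ((Fintype.card (ZMod L × ZMod L) : ℕ) : ℝ) = (L : ℝ) ^ 2 := by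
    rw [Fintype.card_prod, ZMod.card]
    push_cast
    ring
  rw [← hcard, ← ham_toricFrame]
  refine ⟨(toricFrame L).isHermitian_ham, (toricFrame L).le_eigenvalues_ham, ?_⟩
  rw [card_filter_eigenvalues_eq_finrank_eigenspace]
  exact finrank_eigenspace_ham_toricFrame L
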